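/- arXiv:2310.14770 — 2 statements merged into one kernel-verified Lean document; each statement's English description precedes it below -/
import Mathlib

section
/- Theorem (H-consistency bound for cross-entropy score-based surrogates, conditional form, case μ ∈ [0,1)). For every μ ∈ [0,1), every conditional probability vector p, and every score vector v ∈ ℝ^{n+1}, the abstention calibration gap is bounded by the surrogate calibration gap as ΔC_abs(v,p) ≤ sqrt( (2 − c) · 2^μ · (2 − μ) · ΔC_μ(v,p) ). This is the conditional (pointwise) form, over a symmetric and complete hypothesis set, of the H-consistency bound E_{L_abs}(h) − E*_{L_abs}(H) + M_{L_abs}(H) ≤ Γ_μ(E_{L_μ}(h) − E*_{L_μ}(H) + M_{L_μ}(H)) with Γ_μ(t) = sqrt((2−c)2^μ(2−μ)t). -/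
/- Setting: `n = m + 1 ≥ 2` classes (indices `0, …, m` of `Fin (m+2)` via `castSucc`), the
abstention label is `Fin.last (m+1)`, and `c ∈ (0,1)` is the abstention cost. -/

/-- Maximum of the class scores. -/
noncomputable def classMax (m : ℕ) (v : Fin (m + 2) → ℝ) : ℝ :=
  Finset.univ.sup' Finset.univ_nonempty (fun i : Fin (m + 1) => v i.castSucc)

/-- The prediction `𝗁(v)` of a score vector: the abstention label `Fin.last (m+1)` if its score
is at least the maximal class score, and otherwise the smallest class index achieving the
maximal class score (deterministic tie-breaking). -/
noncomputable def pred (m : ℕ) (v : Fin (m + 2) → ℝ) : Fin (m + 2) :=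
  if classMax m v ≤ v (Fin.last (m + 1)) then Fin.last (m + 1)
  else Fin.castSucc <|
    (Finset.univ.filter fun i : Fin (m + 1) => v i.castSucc = classMax m v).min'
      (by
        obtain ⟨b, -, hb⟩ :=
          Finset.exists_mem_eq_sup' (Finset.univ_nonempty (α := Fin (m + 1)))
            (fun i : Fin (m + 1) => v i.castSucc)
        exact ⟨b, Finset.mem_filter.mpr ⟨Finset.mem_univ b, hb.symm⟩⟩)

/-- Extension of a conditional probability vector by `p (n+1) := 1 - c`. -/
noncomputable def pext (m : ℕ) (c : ℝ) (p : Fin (m + 1) → ℝ) : Fin (m + 2) → ℝ :=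
  Fin.snoc p (1 - c)

/-- Conditional abstention risk `C_abs(v, p) = 1 - p(𝗁(v))`. -/
noncomputable def condAbsRisk (m : ℕ) (c : ℝ) (p : Fin (m + 1) → ℝ)
    (v : Fin (m + 2) → ℝ) : ℝ :=
  1 - pext m c p (pred m v)

/-- The cross-entropy family of losses `ℓ_μ` (logistic loss at `μ = 1`, generalized
cross-entropy for `μ ∈ (1,2)`, mean absolute error at `μ = 2`). -/
noncomputable def ellmu (m : ℕ) (μ : ℝ) (v : Fin (m + 2) → ℝ) (y : Fin (m + 2)) : ℝ :=
  if μ = 1 then Real.log (∑ y', Real.exp (v y' - v y))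
  else (1 / (1 - μ)) * ((∑ y', Real.exp (v y' - v y)) ^ (1 - μ) - 1)

/-- Conditional risk of the cross-entropy score-based surrogate
`C_μ(v, p) = Σ_{y=1}^{n+1} p(y) ℓ_μ(v, y)`, with `p(n+1) = 1 - c`. -/
noncomputable def condSurRisk (m : ℕ) (μ c : ℝ) (p : Fin (m + 1) → ℝ)
    (v : Fin (m + 2) → ℝ) : ℝ :=
  ∑ y, pext m c p y * ellmu m μ v y

/-!
Write `s = μ - 1 ∈ [-1, 0)`, so that the surrogate loss of a label `y` is an increasing affine
function of `(exp (v y) / ∑ exp v) ^ s`. Let `i` maximise the weights `q` and let `j` be the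
predicted label, so `v i ≤ v j`. Redistributing the mass `exp (v i) + exp (v j)` between `i` and `j`
in the ratio `(1 + u) : (1 - u)`, with `u = (q i - q j) / ((1 - s) * (q i + q j))`, leaves the other
losses unchanged. Bernoulli's inequality shows that passing to equal shares does not increase the
risk, and a second-order bound on `(1 + u) ^ s` shows that the tilt by `u` then decreases it by a
multiple of `(q i - q j) ^ 2 / (q i + q j)`. Finally `q i + q j` is at most the total weight.
-/

section PowerInequalities

variable {s x : ℝ}

lemma one_add_mul_le_rpow_one_add_of_nonpos (hs : s ≤ 0) (hx : -1 < x) :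
    1 + s * x ≤ (1 + x) ^ s := by
  have hpos : 0 < 1 + x := by linarith
  have hlog : Real.log (1 + x) ≤ x := by linarith [Real.log_le_sub_one_of_pos hpos]
  calc 1 + s * x ≤ Real.log (1 + x) * s + 1 := by nlinarith
    _ ≤ Real.exp (Real.log (1 + x) * s) := Real.add_one_le_exp _
    _ = (1 + x) ^ s := (Real.rpow_def_of_pos hpos s).symm

lemma hasDerivAt_rpow_one_add (s : ℝ) (hx : -1 < x) :
    HasDerivAt (fun t : ℝ => (1 + t) ^ s) (s * (1 + x) ^ (s - 1)) x := by
  simpa using ((hasDerivAt_id x).const_add 1).rpow_const (p := s) (Or.inl (by simp; linarith))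

lemma hasDerivAt_rpow_one_sub (s : ℝ) (hx : x < 1) :
    HasDerivAt (fun t : ℝ => (1 - t) ^ s) (-(s * (1 - x) ^ (s - 1))) x := by
  simpa using ((hasDerivAt_id x).const_sub 1).rpow_const (p := s) (Or.inl (by simp; linarith))

lemma apply_le_apply_zero_of_hasDerivAt_nonpos {f f' : ℝ → ℝ} {b : ℝ}
    (hf : ∀ t ∈ Set.Ico 0 b, HasDerivAt f (f' t) t) (hf' : ∀ t ∈ Set.Ico 0 b, f' t ≤ 0)
    (hx : x ∈ Set.Ico 0 b) : f x ≤ f 0 := by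
  have hanti : AntitoneOn f (Set.Ico 0 b) :=
    antitoneOn_of_hasDerivWithinAt_nonpos (convex_Ico 0 b)
      (fun t ht => (hf t ht).continuousAt.continuousWithinAt)
      (fun t ht => (hf t (interior_subset ht)).hasDerivWithinAt)
      (fun t ht => hf' t (interior_subset ht))
  exact hanti ⟨le_rfl, hx.1.trans_lt hx.2⟩ hx hx.1

lemma rpow_one_add_sub_rpow_one_sub_le (hs : s ≤ 0) (hx : x ∈ Set.Ico (0 : ℝ) 1) :
    (1 + x) ^ s - (1 - x) ^ s ≤ 2 * s * x := by
  have hderiv : ∀ t ∈ Set.Ico (0 : ℝ) 1,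
      HasDerivAt (fun t : ℝ => (1 + t) ^ s - (1 - t) ^ s - 2 * s * t)
        (s * ((1 + t) ^ (s - 1) + (1 - t) ^ (s - 1) - 2)) t := fun t ht =>
    (((hasDerivAt_rpow_one_add s (by linarith [ht.1])).sub
      (hasDerivAt_rpow_one_sub s ht.2)).sub
      ((hasDerivAt_id t).const_mul (2 * s))).congr_deriv (by ring)
  have hderiv_nonpos : ∀ t ∈ Set.Ico (0 : ℝ) 1,
      s * ((1 + t) ^ (s - 1) + (1 - t) ^ (s - 1) - 2) ≤ 0 := by
    intro t ht
    have hplus := one_add_mul_le_rpow_one_add_of_nonpos (s := s - 1) (x := t)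
      (by linarith) (by linarith [ht.1])
    have hminus := one_add_mul_le_rpow_one_add_of_nonpos (s := s - 1) (x := -t)
      (by linarith) (by linarith [ht.2])
    rw [← sub_eq_add_neg] at hminus
    exact mul_nonpos_of_nonpos_of_nonneg hs (by linarith)
  have hle := apply_le_apply_zero_of_hasDerivAt_nonpos hderiv hderiv_nonpos hx
  simp only [add_zero, sub_zero, Real.one_rpow, mul_zero, sub_self] at hle
  linarith

lemma hasDerivAt_rpow_one_add_add_rpow_one_sub (s : ℝ) (hx : x ∈ Set.Ico (0 : ℝ) 1) :
    HasDerivAt (fun t : ℝ => (1 + t) ^ s + (1 - t) ^ s - s * (s - 1) * t ^ 2)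
      (s * ((1 + x) ^ (s - 1) - (1 - x) ^ (s - 1) - 2 * (s - 1) * x)) x :=
  (((hasDerivAt_rpow_one_add s (by linarith [hx.1])).add
    (hasDerivAt_rpow_one_sub s hx.2)).sub
    ((hasDerivAt_pow 2 x).const_mul (s * (s - 1)))).congr_deriv (by push_cast; ring)

lemma le_rpow_one_add_add_rpow_one_sub (hs : s ≤ 0) (hx : x ∈ Set.Ico (0 : ℝ) 1) :
    2 + s * (s - 1) * x ^ 2 ≤ (1 + x) ^ s + (1 - x) ^ s := by
  have hle := apply_le_apply_zero_of_hasDerivAt_nonpos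
    (fun t ht => (hasDerivAt_rpow_one_add_add_rpow_one_sub s ht).neg)
    (fun t ht => neg_nonpos.2 <| mul_nonneg_of_nonpos_of_nonpos hs <| sub_nonpos.2 <|
      rpow_one_add_sub_rpow_one_sub_le (by linarith) ht) hx
  simp only [Pi.neg_apply, add_zero, sub_zero, Real.one_rpow, ne_eq, OfNat.ofNat_ne_zero,
    not_false_eq_true, zero_pow, mul_zero] at hle
  linarith

lemma rpow_one_add_add_rpow_one_sub_le (hs : s ∈ Set.Icc (0 : ℝ) 1)
    (hx : x ∈ Set.Ico (0 : ℝ) 1) :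
    (1 + x) ^ s + (1 - x) ^ s ≤ 2 + s * (s - 1) * x ^ 2 := by
  have hle := apply_le_apply_zero_of_hasDerivAt_nonpos
    (fun t ht => hasDerivAt_rpow_one_add_add_rpow_one_sub s ht)
    (fun t ht => mul_nonpos_of_nonneg_of_nonpos hs.1 <| sub_nonpos.2 <|
      rpow_one_add_sub_rpow_one_sub_le (by linarith [hs.2]) ht) hx
  simp only [add_zero, sub_zero, Real.one_rpow, ne_eq, OfNat.ofNat_ne_zero, not_false_eq_true,
    zero_pow, mul_zero] at hle
  linarith

-- As `(1 + (1 - s) * t) * (1 + t) ^ s = (1 - s) * (1 + t) ^ (s + 1) + s * (1 + t) ^ s`, this is a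
-- combination of the second-order bounds for the exponents `s + 1` and `s`.
lemma weighted_rpow_one_add_add_rpow_one_sub_le (hs : s ∈ Set.Icc (-1 : ℝ) 0)
    (hx : x ∈ Set.Ico (0 : ℝ) 1) :
    (1 + (1 - s) * x) * (1 + x) ^ s + (1 - (1 - s) * x) * (1 - x) ^ s
      ≤ 2 + s * (1 - s) * x ^ 2 := by
  obtain ⟨hs_ge, hs_le⟩ := hs
  have hupper := rpow_one_add_add_rpow_one_sub_le (s := s + 1) ⟨by linarith, by linarith⟩ hx
  rw [Real.rpow_add_one (by linarith [hx.1]), Real.rpow_add_one (by linarith [hx.2])] at hupper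
  have hlower := le_rpow_one_add_add_rpow_one_sub hs_le hx
  linarith [mul_le_mul_of_nonneg_left hupper (by linarith : 0 ≤ 1 - s),
    mul_le_mul_of_nonpos_left hlower hs_le]

end PowerInequalities

section TwoWeights

variable {s q r : ℝ}

lemma add_le_mul_rpow_one_sub_add_mul_rpow_one_add {x : ℝ} (hs : s ≤ 0) (hr : 0 ≤ r)
    (hrq : r ≤ q) (hx : x ∈ Set.Ico (0 : ℝ) 1) :
    q + r ≤ q * (1 - x) ^ s + r * (1 + x) ^ s := by
  have hminus := one_add_mul_le_rpow_one_add_of_nonpos (x := -x) hs (by linarith [hx.2])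
  have hplus := one_add_mul_le_rpow_one_add_of_nonpos (x := x) hs (by linarith [hx.1])
  rw [← sub_eq_add_neg] at hminus
  have htilt : 0 ≤ -s * x * (q - r) :=
    mul_nonneg (mul_nonneg (neg_nonneg.2 hs) hx.1) (sub_nonneg.2 hrq)
  calc q + r ≤ q * (1 + s * -x) + r * (1 + s * x) := by linarith
    _ ≤ q * (1 - x) ^ s + r * (1 + x) ^ s :=
      add_le_add (mul_le_mul_of_nonneg_left hminus (hr.trans hrq))
        (mul_le_mul_of_nonneg_left hplus hr)

/-- The tilt `u` of the shares `1 + u` and `1 - u` given to two labels of weights `q` and `r` so as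
to lower the surrogate risk. It approximates, to first order in `q - r`, the minimiser of
`q * (1 + u) ^ s + r * (1 - u) ^ s`. -/
noncomputable def shareTilt (s q r : ℝ) : ℝ :=
  (q - r) / ((1 - s) * (q + r))

lemma shareTilt_mem_Ico (hs : s < 0) (hr : 0 ≤ r) (hrq : r < q) :
    shareTilt s q r ∈ Set.Ico (0 : ℝ) 1 := by
  have hden : 0 < (1 - s) * (q + r) := mul_pos (by linarith) (by linarith)
  refine ⟨div_nonneg (sub_nonneg.2 hrq.le) hden.le, (div_lt_one hden).2 ?_⟩
  nlinarith

lemma mul_rpow_one_add_shareTilt_le (hs : s ∈ Set.Ico (-1 : ℝ) 0) (hr : 0 ≤ r) (hrq : r < q) :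
    q * (1 + shareTilt s q r) ^ s + r * (1 - shareTilt s q r) ^ s
      ≤ q + r + s * ((q - r) ^ 2 / (2 * (1 - s) * (q + r))) := by
  have hsum : 0 < q + r := by linarith
  have hs' : 0 < 1 - s := by linarith [hs.2]
  set u := shareTilt s q r with hu
  have hdiff : q - r = (1 - s) * u * (q + r) := by
    rw [hu, shareTilt]
    field_simp
  have hq : q = (q + r) / 2 * (1 + (1 - s) * u) := by linarith
  have hr' : r = (q + r) / 2 * (1 - (1 - s) * u) := by linarith
  calc q * (1 + u) ^ s + r * (1 - u) ^ s
      = (q + r) / 2 * ((1 + (1 - s) * u) * (1 + u) ^ s + (1 - (1 - s) * u) * (1 - u) ^ s) := by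
        rw [mul_add, ← mul_assoc, ← mul_assoc, ← hq, ← hr']
    _ ≤ (q + r) / 2 * (2 + s * (1 - s) * u ^ 2) := by
        gcongr (q + r) / 2 * ?_
        exact weighted_rpow_one_add_add_rpow_one_sub_le ⟨hs.1, hs.2.le⟩
          (shareTilt_mem_Ico hs.2 hr hrq)
    _ = q + r + s * ((q - r) ^ 2 / (2 * (1 - s) * (q + r))) := by
        rw [hdiff]
        field_simp

lemma exists_eq_midpoint_mul_one_sub_and_one_add {x y : ℝ} (hx : 0 < x) (hxy : x ≤ y) :
    ∃ t ∈ Set.Ico (0 : ℝ) 1, x = (x + y) / 2 * (1 - t) ∧ y = (x + y) / 2 * (1 + t) := by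
  have hsum : 0 < x + y := by linarith
  refine ⟨(y - x) / (x + y), ⟨div_nonneg (sub_nonneg.2 hxy) hsum.le, ?_⟩, ?_, ?_⟩
  · rw [div_lt_one hsum]
    linarith
  all_goals
    field_simp
    ring

lemma exists_add_eq_and_le_weighted_rpow_sub (hs : s ∈ Set.Ico (-1 : ℝ) 0) (hr : 0 ≤ r)
    (hrq : r < q) {x y : ℝ} (hx : 0 < x) (hxy : x ≤ y) :
    ∃ x' y' : ℝ, 0 < x' ∧ 0 < y' ∧ x' + y' = x + y ∧
      ((x + y) / 2) ^ s * (-s * ((q - r) ^ 2 / (2 * (1 - s) * (q + r))))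
        ≤ q * (x ^ s - x' ^ s) + r * (y ^ s - y' ^ s) := by
  obtain ⟨t, ht, hx_eq, hy_eq⟩ := exists_eq_midpoint_mul_one_sub_and_one_add hx hxy
  set A := (x + y) / 2 with hA
  have hA_pos : 0 < A := by linarith [hA]
  set u := shareTilt s q r
  have hu : u ∈ Set.Ico (0 : ℝ) 1 := shareTilt_mem_Ico hs.2 hr hrq
  have hu_add : 0 < 1 + u := by linarith [hu.1]
  have hu_sub : 0 < 1 - u := by linarith [hu.2]
  refine ⟨A * (1 + u), A * (1 - u), mul_pos hA_pos hu_add, mul_pos hA_pos hu_sub, by linarith, ?_⟩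
  have hbalance := add_le_mul_rpow_one_sub_add_mul_rpow_one_add hs.2.le hr hrq.le ht
  have htilt := mul_rpow_one_add_shareTilt_le hs hr hrq
  rw [hx_eq, hy_eq]
  simp only [Real.mul_rpow hA_pos.le, hu_add.le, hu_sub.le, sub_nonneg.2 ht.2.le,
    add_nonneg zero_le_one ht.1]
  calc A ^ s * (-s * ((q - r) ^ 2 / (2 * (1 - s) * (q + r))))
      ≤ A ^ s * (q * (1 - t) ^ s + r * (1 + t) ^ s - (q * (1 + u) ^ s + r * (1 - u) ^ s)) := by
        gcongr
        linarith
    _ = _ := by ring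

end TwoWeights

section CrossEntropy

variable {ι : Type*} [Fintype ι]

/-- The cross-entropy family of losses `ℓ_μ` on an arbitrary finite label set; `ellmu` is the case
of the labels `Fin (m + 2)`. -/
noncomputable def crossEntropyLoss (μ : ℝ) (v : ι → ℝ) (y : ι) : ℝ :=
  if μ = 1 then Real.log (∑ y', Real.exp (v y' - v y))
  else (1 / (1 - μ)) * ((∑ y', Real.exp (v y' - v y)) ^ (1 - μ) - 1)

/-- The risk of the score vector `v` under `ℓ_μ` when the label `y` has weight `q y`. The weights
need not sum to one, which accommodates the extra weight `1 - c` of the abstention label. -/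
noncomputable def crossEntropyRisk (μ : ℝ) (q v : ι → ℝ) : ℝ :=
  ∑ y, q y * crossEntropyLoss μ v y

variable {μ : ℝ} {q v : ι → ℝ} {i j : ι}

lemma crossEntropyLoss_eq_of_ne_one (hμ : μ ≠ 1) (v : ι → ℝ) (y : ι) :
    crossEntropyLoss μ v y =
      (1 / (1 - μ)) * ((∑ y', Real.exp (v y')) ^ (1 - μ) * Real.exp (v y) ^ (μ - 1) - 1) := by
  have hsum : 0 ≤ ∑ y', Real.exp (v y') := Finset.sum_nonneg fun _ _ => (Real.exp_pos _).le
  simp_rw [crossEntropyLoss, if_neg hμ, Real.exp_sub, ← Finset.sum_div]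
  rw [Real.div_rpow hsum (Real.exp_pos _).le, ← neg_sub 1 μ, Real.rpow_neg (Real.exp_pos _).le,
    ← div_eq_mul_inv]

lemma crossEntropyLoss_nonneg (μ : ℝ) (v : ι → ℝ) (y : ι) : 0 ≤ crossEntropyLoss μ v y := by
  have hone : 1 ≤ ∑ y', Real.exp (v y' - v y) := by
    simpa using Finset.single_le_sum (f := fun y' => Real.exp (v y' - v y))
      (fun _ _ => (Real.exp_pos _).le) (Finset.mem_univ y)
  rw [crossEntropyLoss]
  split_ifs
  · exact Real.log_nonneg hone
  · rcases le_total 0 (1 - μ) with hexp | hexp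
    · exact mul_nonneg (one_div_nonneg.2 hexp) (sub_nonneg.2 (Real.one_le_rpow hone hexp))
    · exact mul_nonneg_of_nonpos_of_nonpos (one_div_nonpos.2 hexp)
        (sub_nonpos.2 (Real.rpow_le_one_of_one_le_of_nonpos hone hexp))

lemma bddBelow_range_crossEntropyRisk (μ : ℝ) (hq : ∀ y, 0 ≤ q y) :
    BddBelow (Set.range (crossEntropyRisk μ q)) :=
  ⟨0, Set.forall_mem_range.2 fun v =>
    Finset.sum_nonneg fun y _ => mul_nonneg (hq y) (crossEntropyLoss_nonneg μ v y)⟩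

lemma sum_sub_sum_eq_of_eq_off_pair {f g : ι → ℝ} (hij : i ≠ j)
    (hfg : ∀ y, y ≠ i → y ≠ j → f y = g y) :
    ∑ y, f y - ∑ y, g y = (f i - g i) + (f j - g j) := by
  rw [← Finset.sum_sub_distrib]
  exact Fintype.sum_eq_add i j hij fun y hy => sub_eq_zero.2 (hfg y hy.1 hy.2)

lemma exists_crossEntropyRisk_sub_eq (hμ : μ ≠ 1) (q v : ι → ℝ) (hij : i ≠ j) {x y : ℝ}
    (hx : 0 < x) (hy : 0 < y) (hxy : x + y = Real.exp (v i) + Real.exp (v j)) :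
    ∃ w, crossEntropyRisk μ q v - crossEntropyRisk μ q w =
      (∑ k, Real.exp (v k)) ^ (1 - μ) / (1 - μ) *
        (q i * (Real.exp (v i) ^ (μ - 1) - x ^ (μ - 1)) +
          q j * (Real.exp (v j) ^ (μ - 1) - y ^ (μ - 1))) := by
  classical
  set w := Function.update (Function.update v i (Real.log x)) j (Real.log y)
  have hwi : Real.exp (w i) = x := by simp [w, hij, Real.exp_log hx]
  have hwj : Real.exp (w j) = y := by simp [w, Real.exp_log hy]
  have hw : ∀ k, k ≠ i → k ≠ j → v k = w k := fun k hki hkj => by simp [w, hki, hkj]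
  have hsum : ∑ k, Real.exp (w k) = ∑ k, Real.exp (v k) := by
    have hdiff := sum_sub_sum_eq_of_eq_off_pair hij fun k hki hkj =>
      congrArg Real.exp (hw k hki hkj)
    rw [hwi, hwj] at hdiff
    linarith
  refine ⟨w, ?_⟩
  simp_rw [crossEntropyRisk, crossEntropyLoss_eq_of_ne_one hμ, hsum]
  rw [sum_sub_sum_eq_of_eq_off_pair hij fun k hki hkj => by rw [hw k hki hkj], hwi, hwj]
  ring

lemma exists_le_crossEntropyRisk_sub (hμ : μ ∈ Set.Ico (0 : ℝ) 1) (hv : v i ≤ v j)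
    (hqj : 0 ≤ q j) (hq : q j < q i) :
    ∃ w, 2 ^ (1 - μ) * ((q i - q j) ^ 2 / (2 * (2 - μ) * (q i + q j)))
      ≤ crossEntropyRisk μ q v - crossEntropyRisk μ q w := by
  have hμ' : 0 < 1 - μ := sub_pos.2 hμ.2
  have hij : i ≠ j := by rintro rfl; exact hq.false
  obtain ⟨x, y, hx, hy, hxy, hgain⟩ := exists_add_eq_and_le_weighted_rpow_sub
    (s := μ - 1) ⟨by linarith [hμ.1], by linarith⟩ hqj hq (Real.exp_pos (v i))
    (Real.exp_le_exp.2 hv)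
  obtain ⟨w, hw⟩ := exists_crossEntropyRisk_sub_eq hμ.2.ne q v hij hx hy hxy
  refine ⟨w, ?_⟩
  rw [show 1 - (μ - 1) = 2 - μ by ring, neg_sub] at hgain
  set G := (q i - q j) ^ 2 / (2 * (2 - μ) * (q i + q j))
  have hG : 0 ≤ G :=
    div_nonneg (sq_nonneg _) (mul_nonneg (by linarith) (by linarith))
  set A := (Real.exp (v i) + Real.exp (v j)) / 2
  set Z := ∑ k, Real.exp (v k)
  have hA_pos : 0 < A := by positivity
  have hAZ : 2 * A ≤ Z :=
    (mul_div_cancel₀ _ two_ne_zero).trans_le <| Finset.add_le_sum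
      (fun k _ => (Real.exp_pos (v k)).le) (Finset.mem_univ i) (Finset.mem_univ j) hij
  have hZ : 0 ≤ Z := by linarith
  have hratio : (2 : ℝ) ^ (1 - μ) ≤ Z ^ (1 - μ) * A ^ (μ - 1) := by
    rw [← neg_sub 1 μ, Real.rpow_neg hA_pos.le, ← div_eq_mul_inv, ← Real.div_rpow hZ hA_pos.le]
    exact Real.rpow_le_rpow zero_le_two ((le_div_iff₀ hA_pos).2 hAZ) hμ'.le
  calc 2 ^ (1 - μ) * G ≤ Z ^ (1 - μ) * A ^ (μ - 1) * G := by gcongr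
    _ = Z ^ (1 - μ) / (1 - μ) * (A ^ (μ - 1) * ((1 - μ) * G)) := by field_simp
    _ ≤ crossEntropyRisk μ q v - crossEntropyRisk μ q w := by
        rw [hw]
        gcongr

lemma sub_le_sqrt_crossEntropyRisk_sub_iInf (hμ : μ ∈ Set.Ico (0 : ℝ) 1) (hq : ∀ y, 0 ≤ q y)
    (hv : v i ≤ v j) :
    q i - q j ≤ √((∑ y, q y) * 2 ^ μ * (2 - μ) *
      (crossEntropyRisk μ q v - ⨅ w, crossEntropyRisk μ q w)) := by
  rcases le_or_gt (q i) (q j) with hle | hlt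
  · exact (sub_nonpos.2 hle).trans (Real.sqrt_nonneg _)
  have hij : i ≠ j := by rintro rfl; exact hlt.false
  obtain ⟨w, hw⟩ := exists_le_crossEntropyRisk_sub hμ hv (hq j) hlt
  have hinf := ciInf_le (bddBelow_range_crossEntropyRisk μ hq) w
  have hpair : 0 < q i + q j := by linarith [hq j]
  have hμ' : 0 < 2 - μ := by linarith [hμ.2]
  have htwo : (2 : ℝ) ^ μ * 2 ^ (1 - μ) = 2 := by
    rw [← Real.rpow_add two_pos, add_sub_cancel, Real.rpow_one]
  have hsum : 0 ≤ ∑ y, q y := Finset.sum_nonneg fun y _ => hq y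
  refine Real.le_sqrt_of_sq_le ?_
  calc (q i - q j) ^ 2 = (q i + q j) * ((q i - q j) ^ 2 / (q i + q j)) := by field_simp
    _ ≤ (∑ y, q y) * ((q i - q j) ^ 2 / (q i + q j)) := by
        gcongr
        exact Finset.add_le_sum (fun y _ => hq y) (Finset.mem_univ i) (Finset.mem_univ j) hij
    _ = (∑ y, q y) * (2 - μ) * ((2 : ℝ) ^ μ * 2 ^ (1 - μ)) *
          ((q i - q j) ^ 2 / (2 * (2 - μ) * (q i + q j))) := by
        rw [htwo]
        field_simp
    _ = (∑ y, q y) * 2 ^ μ * (2 - μ) *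
          (2 ^ (1 - μ) * ((q i - q j) ^ 2 / (2 * (2 - μ) * (q i + q j)))) := by ring
    _ ≤ _ := by
        gcongr
        linarith

theorem stmt_2_general (hμ : μ ∈ Set.Ico (0 : ℝ) 1) (hq : ∀ y, 0 ≤ q y) (h : (ι → ℝ) → ι)
    (hv : ∀ y, v y ≤ v (h v)) :
    (1 - q (h v)) - ⨅ w, (1 - q (h w))
      ≤ √((∑ y, q y) * 2 ^ μ * (2 - μ) *
          (crossEntropyRisk μ q v - ⨅ w, crossEntropyRisk μ q w)) := by
  have : Nonempty ι := ⟨h v⟩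
  obtain ⟨i, hi⟩ := Finite.exists_max q
  have hinf : 1 - q i ≤ ⨅ w, (1 - q (h w)) := le_ciInf fun w => by linarith [hi (h w)]
  calc (1 - q (h v)) - ⨅ w, (1 - q (h w)) ≤ q i - q (h v) := by linarith
    _ ≤ _ := sub_le_sqrt_crossEntropyRisk_sub_iInf hμ hq (hv i)

end CrossEntropy

section Abstention

variable {m : ℕ}

lemma le_classMax (v : Fin (m + 2) → ℝ) (i : Fin (m + 1)) : v i.castSucc ≤ classMax m v :=
  Finset.le_sup' (fun i : Fin (m + 1) => v i.castSucc) (Finset.mem_univ i)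

lemma apply_pred (v : Fin (m + 2) → ℝ) :
    v (pred m v) = max (classMax m v) (v (Fin.last (m + 1))) := by
  rw [pred]
  split_ifs with habstain
  · exact (max_eq_right habstain).symm
  · rw [max_eq_left (not_le.1 habstain).le]
    exact (Finset.mem_filter.1 (Finset.min'_mem
      (Finset.univ.filter fun i : Fin (m + 1) => v i.castSucc = classMax m v) _)).2

lemma le_apply_pred (v : Fin (m + 2) → ℝ) (y : Fin (m + 2)) : v y ≤ v (pred m v) := by
  rw [apply_pred v]
  induction y using Fin.lastCases with
  | last => exact le_max_right _ _
  | cast i => exact (le_classMax v i).trans (le_max_left _ _)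

variable {p : Fin (m + 1) → ℝ} {c : ℝ}

lemma pext_nonneg (hc : c ≤ 1) (hp : ∀ y, 0 ≤ p y) (y : Fin (m + 2)) : 0 ≤ pext m c p y := by
  rw [pext]
  induction y using Fin.lastCases with
  | last => simpa using hc
  | cast i => simpa using hp i

lemma sum_pext (hp : ∑ y, p y = 1) : ∑ y, pext m c p y = 2 - c := by
  simp only [pext, Fin.sum_snoc, hp]
  ring

end Abstention

/-- **Theorem (H-consistency bound for cross-entropy score-based surrogates, conditional
form, case `μ ∈ [0,1)`).** The abstention calibration gap is bounded by
`sqrt((2-c) · 2^μ · (2-μ) · ΔC_μ(v,p))`, where the calibration gaps are taken over all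
score vectors (symmetric and complete hypothesis set). -/
theorem stmt_2 (m : ℕ) (hm : 1 ≤ m) (c : ℝ) (hc : c ∈ Set.Ioo (0 : ℝ) 1)
    (μ : ℝ) (hμ : μ ∈ Set.Ico (0 : ℝ) 1)
    (p : Fin (m + 1) → ℝ) (hp0 : ∀ y, 0 ≤ p y) (hp1 : ∑ y, p y = 1)
    (v : Fin (m + 2) → ℝ) :
    condAbsRisk m c p v - ⨅ w, condAbsRisk m c p w
      ≤ Real.sqrt ((2 - c) * (2 : ℝ) ^ μ * (2 - μ) *
          (condSurRisk m μ c p v - ⨅ w, condSurRisk m μ c p w)) := by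
  rw [← sum_pext hp1]
  exact stmt_2_general hμ (pext_nonneg hc.2.le hp0) (pred m) (le_apply_pred v)
end

section
/- Lemma (power-mean deficiency inequality for μ ∈ [0,1)). Let c ∈ (0,1), μ ∈ [0,1), and let a, b ≥ 0 satisfy a + b ≤ 2 − c. Then (a + b)/2 − ( (a^{1/(2−μ)} + b^{1/(2−μ)})/2 )^{2−μ} ≥ (1 − μ)·(a − b)² / ( 4·(2 − c)·(2 − μ) ). -/
/-!
Write `M t` for the power mean of order `q ∈ (0, 1]` of `1 + t` and `1 - t`. By homogeneity it is
enough to show `M t ≤ 1 - (1 - q) t² / 2` on `[0, 1]`. There `M 0 = 1`, and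
`-M' t = M t ^ (1 - q) * ((1 - t) ^ (q - 1) - (1 + t) ^ (q - 1)) / 2`.
Bounding `M t` below by the geometric mean `√((1 + t) (1 - t))` turns the right-hand side into
`sinh ((1 - q) / 2 * log ((1 + t) / (1 - t)))`, which is at least `(1 - q) t`
since `x ≤ sinh x` and `2 t ≤ log ((1 + t) / (1 - t))`.
-/

open Real Set

/-- The power mean of order `q` of two nonnegative reals, for `q ≠ 0`. The value at `q = 0` is
the junk value `1`, not the geometric mean. -/
noncomputable def powerMean (q a b : ℝ) : ℝ :=
  ((a ^ q + b ^ q) / 2) ^ (1 / q)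

section PowerMean

variable {q a b s t u v : ℝ}

theorem powerMean_comm (q a b : ℝ) : powerMean q a b = powerMean q b a := by
  rw [powerMean, powerMean, add_comm]

theorem powerMean_self (hq : q ≠ 0) (ha : 0 ≤ a) : powerMean q a a = a := by
  rw [powerMean, add_self_div_two, one_div, rpow_rpow_inv ha hq]

theorem powerMean_mul_left (hq : q ≠ 0) (hs : 0 ≤ s) (ha : 0 ≤ a) (hb : 0 ≤ b) :
    powerMean q (s * a) (s * b) = s * powerMean q a b := by
  rw [powerMean, powerMean, mul_rpow hs ha, mul_rpow hs hb, ← mul_add, mul_div_assoc,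
    mul_rpow (by positivity) (by positivity), one_div, rpow_rpow_inv hs hq]

theorem sqrt_mul_le_powerMean (hq : 0 < q) (ha : 0 ≤ a) (hb : 0 ≤ b) :
    √(a * b) ≤ powerMean q a b := by
  have am_gm : √(a * b) ^ q ≤ (a ^ q + b ^ q) / 2 := by
    have sqrt_rpow {x : ℝ} (hx : 0 ≤ x) : √x ^ q * √x ^ q = x ^ q := by
      rw [← mul_rpow (sqrt_nonneg x) (sqrt_nonneg x), mul_self_sqrt hx]
    rw [sqrt_mul ha, mul_rpow (sqrt_nonneg a) (sqrt_nonneg b), ← sqrt_rpow ha, ← sqrt_rpow hb]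
    linarith [two_mul_le_add_sq (√a ^ q) (√b ^ q)]
  calc √(a * b) = (√(a * b) ^ q) ^ (1 / q) := by
        rw [one_div, rpow_rpow_inv (sqrt_nonneg _) hq.ne']
    _ ≤ powerMean q a b := rpow_le_rpow (by positivity) am_gm (by positivity)

theorem continuous_powerMean (hq : 0 < q) {f g : ℝ → ℝ} (hf : Continuous f) (hg : Continuous g) :
    Continuous fun x ↦ powerMean q (f x) (g x) :=
  (((hf.rpow_const fun _ ↦ .inr hq.le).add (hg.rpow_const fun _ ↦ .inr hq.le)).div_const
    2).rpow_const fun _ ↦ .inr (by positivity)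

theorem hasDerivAt_powerMean (hq : q ≠ 0) {f g : ℝ → ℝ} {f' g' x : ℝ} (hf : HasDerivAt f f' x)
    (hg : HasDerivAt g g' x) (hfx : 0 < f x) (hgx : 0 < g x) :
    HasDerivAt (fun y ↦ powerMean q (f y) (g y))
      (powerMean q (f x) (g x) ^ (1 - q) * ((f' * f x ^ (q - 1) + g' * g x ^ (q - 1)) / 2)) x := by
  have inner_pos : 0 < (f x ^ q + g x ^ q) / 2 := by positivity
  have hasDerivAt_raw := (((hf.rpow_const (p := q) (.inl hfx.ne')).add
    (hg.rpow_const (p := q) (.inl hgx.ne'))).div_const 2).rpow_const (p := 1 / q)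
      (.inl inner_pos.ne')
  have outer_pow : powerMean q (f x) (g x) ^ (1 - q) = ((f x ^ q + g x ^ q) / 2) ^ (1 / q - 1) := by
    rw [powerMean, ← rpow_mul inner_pos.le]
    congr 1
    field_simp
  refine hasDerivAt_raw.congr_deriv ?_
  rw [outer_pow, Pi.add_apply]
  field_simp

theorem two_mul_le_log_one_add_sub_log_one_sub (ht : 0 ≤ t) (ht1 : t < 1) :
    2 * t ≤ log (1 + t) - log (1 - t) := by
  have series := hasSum_log_sub_log_of_abs_lt_one (abs_lt.2 ⟨by linarith, ht1⟩)
  simpa using le_hasSum series 0 fun k _ ↦ by positivity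

theorem sqrt_mul_rpow_mul_rpow_neg_sub_rpow_neg (r : ℝ) (hu : 0 < u) (hv : 0 < v) :
    √(u * v) ^ r * (v ^ (-r) - u ^ (-r)) = 2 * sinh (r * (log u - log v) / 2) := by
  rw [sinh_eq, rpow_def_of_pos (sqrt_pos.2 (mul_pos hu hv)), rpow_def_of_pos hu,
    rpow_def_of_pos hv, log_sqrt (mul_pos hu hv).le, log_mul hu.ne' hv.ne', mul_sub, ← exp_add,
    ← exp_add]
  ring_nf

theorem one_sub_mul_log_sub_log_le_powerMean_rpow_mul (hq : 0 < q) (hq1 : q ≤ 1) (hv : 0 < v)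
    (hvu : v ≤ u) :
    (1 - q) * (log u - log v) ≤ powerMean q u v ^ (1 - q) * (v ^ (q - 1) - u ^ (q - 1)) := by
  have hu : 0 < u := hv.trans_le hvu
  have log_diff_nonneg : 0 ≤ (1 - q) * (log u - log v) / 2 :=
    div_nonneg (mul_nonneg (sub_nonneg.2 hq1) (sub_nonneg.2 (log_le_log hv hvu))) zero_le_two
  have rpow_antitone : u ^ (q - 1) ≤ v ^ (q - 1) :=
    rpow_le_rpow_of_nonpos hv hvu (by linarith)
  calc (1 - q) * (log u - log v) ≤ 2 * sinh ((1 - q) * (log u - log v) / 2) := by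
        linarith [self_le_sinh_iff.2 log_diff_nonneg]
    _ = √(u * v) ^ (1 - q) * (v ^ (q - 1) - u ^ (q - 1)) := by
        rw [← sqrt_mul_rpow_mul_rpow_neg_sub_rpow_neg _ hu hv, neg_sub]
    _ ≤ powerMean q u v ^ (1 - q) * (v ^ (q - 1) - u ^ (q - 1)) :=
        mul_le_mul_of_nonneg_right (rpow_le_rpow (sqrt_nonneg _)
          (sqrt_mul_le_powerMean hq hu.le hv.le) (sub_nonneg.2 hq1)) (sub_nonneg.2 rpow_antitone)

theorem antitoneOn_powerMean_one_add_one_sub_add_sq (hq : 0 < q) (hq1 : q ≤ 1) :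
    AntitoneOn (fun t ↦ powerMean q (1 + t) (1 - t) + (1 - q) * t ^ 2 / 2) (Icc 0 1) := by
  refine antitoneOn_of_hasDerivWithinAt_nonpos (convex_Icc 0 1)
    (f' := fun t ↦ powerMean q (1 + t) (1 - t) ^ (1 - q) *
      ((1 * (1 + t) ^ (q - 1) + -1 * (1 - t) ^ (q - 1)) / 2) + (1 - q) * t) ?_ ?_ ?_
  · have := continuous_powerMean hq (continuous_const_add 1) (continuous_sub_left (1 : ℝ))
    fun_prop
  · rw [interior_Icc]
    rintro t ⟨ht0, ht1⟩
    have mean_deriv := hasDerivAt_powerMean hq.ne' ((hasDerivAt_id t).const_add 1)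
      ((hasDerivAt_id t).const_sub 1) (add_pos one_pos ht0) (sub_pos.2 ht1)
    have sq_deriv : HasDerivAt (fun t : ℝ ↦ (1 - q) * t ^ 2 / 2) ((1 - q) * t) t :=
      (((hasDerivAt_pow 2 t).const_mul (1 - q)).div_const 2).congr_deriv (by push_cast; ring)
    exact (mean_deriv.add sq_deriv).hasDerivWithinAt
  · rw [interior_Icc]
    rintro t ⟨ht0, ht1⟩
    have log_bound := mul_le_mul_of_nonneg_left
      (two_mul_le_log_one_add_sub_log_one_sub ht0.le ht1) (sub_nonneg.2 hq1)
    have mean_bound := one_sub_mul_log_sub_log_le_powerMean_rpow_mul hq hq1 (sub_pos.2 ht1)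
      (show 1 - t ≤ 1 + t by linarith)
    linarith

theorem powerMean_one_add_one_sub_le (hq : 0 < q) (hq1 : q ≤ 1) (ht : |t| ≤ 1) :
    powerMean q (1 + t) (1 - t) ≤ 1 - (1 - q) * t ^ 2 / 2 := by
  wlog ht0 : 0 ≤ t generalizing t
  · simpa [powerMean_comm q (1 - t), ← sub_eq_add_neg] using
      this (t := -t) (by rwa [abs_neg]) (by linarith)
  have le_value_at_zero := antitoneOn_powerMean_one_add_one_sub_add_sq hq hq1
    (left_mem_Icc.2 zero_le_one) ⟨ht0, (le_abs_self t).trans ht⟩ ht0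
  rw [le_sub_iff_add_le]
  simpa [powerMean_self hq.ne'] using le_value_at_zero

theorem powerMean_le_half_add_sub (hq : 0 < q) (hq1 : q ≤ 1) (ha : 0 ≤ a) (hb : 0 ≤ b)
    (hab : 0 < a + b) :
    powerMean q a b ≤ (a + b) / 2 - (1 - q) * (a - b) ^ 2 / (4 * (a + b)) := by
  obtain ⟨s, hs⟩ : ∃ s, s = (a + b) / 2 := ⟨_, rfl⟩
  obtain ⟨t, ht⟩ : ∃ t, t = (a - b) / (a + b) := ⟨_, rfl⟩
  have abs_t_le : |t| ≤ 1 := by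
    rw [ht, abs_div, abs_of_pos hab, div_le_one hab, abs_le]
    constructor <;> linarith
  have a_eq : a = s * (1 + t) := by rw [hs, ht]; field_simp; ring
  have b_eq : b = s * (1 - t) := by rw [hs, ht]; field_simp; ring
  obtain ⟨neg_one_le_t, t_le_one⟩ := abs_le.1 abs_t_le
  calc powerMean q a b = s * powerMean q (1 + t) (1 - t) := by
        rw [← powerMean_mul_left hq.ne' (by linarith) (by linarith) (by linarith), ← a_eq, ← b_eq]
    _ ≤ s * (1 - (1 - q) * t ^ 2 / 2) := by
        gcongr
        · linarith
        · exact powerMean_one_add_one_sub_le hq hq1 abs_t_le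
    _ = (a + b) / 2 - (1 - q) * (a - b) ^ 2 / (4 * (a + b)) := by
        rw [hs, ht]; field_simp; ring

theorem powerMean_le_half_add_sub_of_add_le (hq : 0 < q) (hq1 : q ≤ 1) (ha : 0 ≤ a) (hb : 0 ≤ b)
    (hab : a + b ≤ s) :
    powerMean q a b ≤ (a + b) / 2 - (1 - q) * (a - b) ^ 2 / (4 * s) := by
  rcases (add_nonneg ha hb).eq_or_lt' with hab0 | hab0
  · obtain ⟨rfl, rfl⟩ := (add_eq_zero_iff_of_nonneg ha hb).1 hab0
    simp [powerMean_self hq.ne']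
  · refine (powerMean_le_half_add_sub hq hq1 ha hb hab0).trans ?_
    have := sub_nonneg.2 hq1
    gcongr

end PowerMean

theorem stmt_12_general (c μ a b : ℝ) (hc : c < 2) (hμ : μ ≤ 1)
    (ha : 0 ≤ a) (hb : 0 ≤ b) (hab : a + b ≤ 2 - c) :
    (1 - μ) * (a - b) ^ 2 / (4 * (2 - c) * (2 - μ))
      ≤ (a + b) / 2 - ((a ^ (1 / (2 - μ)) + b ^ (1 / (2 - μ))) / 2) ^ (2 - μ) := by
  have hp : 0 < 2 - μ := by linarith
  have hs : 0 < 2 - c := sub_pos.2 hc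
  have deficiency := powerMean_le_half_add_sub_of_add_le (q := 1 / (2 - μ)) (one_div_pos.2 hp)
    ((div_le_one hp).2 (by linarith)) ha hb hab
  have coeff_eq : (1 - 1 / (2 - μ)) * (a - b) ^ 2 / (4 * (2 - c)) =
      (1 - μ) * (a - b) ^ 2 / (4 * (2 - c) * (2 - μ)) := by
    field_simp; ring
  rw [powerMean, one_div_one_div, coeff_eq] at deficiency
  linarith

/-- **Lemma (power-mean deficiency inequality for `μ ∈ [0,1)`).**
For `c ∈ (0,1)`, `μ ∈ [0,1)` and `a, b ≥ 0` with `a + b ≤ 2 - c`,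
`(a+b)/2 - ((a^(1/(2-μ)) + b^(1/(2-μ)))/2)^(2-μ) ≥ (1-μ)(a-b)² / (4(2-c)(2-μ))`. -/
theorem stmt_12 (c μ a b : ℝ) (hc : c ∈ Set.Ioo (0 : ℝ) 1) (hμ : μ ∈ Set.Ico (0 : ℝ) 1)
    (ha : 0 ≤ a) (hb : 0 ≤ b) (hab : a + b ≤ 2 - c) :
    (1 - μ) * (a - b) ^ 2 / (4 * (2 - c) * (2 - μ))
      ≤ (a + b) / 2 - ((a ^ (1 / (2 - μ)) + b ^ (1 / (2 - μ))) / 2) ^ (2 - μ) :=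
  stmt_12_general c μ a b (hc.2.trans one_lt_two) hμ.2.le ha hb hab
end
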